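/- Let G be a countable abelian group of finite exponent. Suppose there exist an additive homomorphism s : (Fin 6 → G) →+ G (tuples with pointwise addition) that preserves ≠, and injective additive endomorphisms e₁, e₂ : G →+ G such that e₁(s(x,y,x,z,y,z)) = e₂(s(y,x,z,x,z,y)) for all x,y,z ∈ G. Then there exists m ≥ 1 such that G is bi-embeddable with ⨁_ℕ ZMod m, or G is bi-embeddable with (⨁_ℕ ZMod m) × ZMod (2*m). -/

import Mathlib

/-! Let `m ≥ 1` be least such that `mG` is finite. By B. H. Neumann's lemma on coverings by cosets,
every finite subgroup of `G` is independent of some element of order `m`; iterating,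
`(⨁_ℕ ZMod m) × A` embeds into `G` for every finite `A ≤ G`. Conversely, a countable group killed
by `m`, such as `G / mG`, embeds into `⨁_ℕ ZMod m` coordinate by coordinate, because `ZMod m` is
injective among the groups killed by `m`; if `mG` is cyclic, one further character of `G` separates
its elements.

The polymorphism restricts to the finite group `mG`. On a finite group with more than two elements,
a homomorphism from tuples that preserves `≠` is an injective function of a single coordinate, and
no such function satisfies the identity. So `mG` has at most two elements. -/

open Function

/-- The subgroup `mG` of `m`-fold multiples. -/
abbrev nsmulRange (G : Type*) [AddCommGroup G] (m : ℕ) : AddSubgroup G :=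
  (nsmulAddMonoidHom m : G →+ G).range

/-- Two additive groups are bi-embeddable if each embeds into the other by a homomorphism. -/
def AddBiembeddable (A B : Type*) [AddCommGroup A] [AddCommGroup B] : Prop :=
  ∃ (f : A →+ B) (g : B →+ A), Injective f ∧ Injective g

/-- `G` has elements of order `m` independent of any prescribed finite subgroup; iterating the
choice yields infinitely many independent cyclic subgroups of order `m`. -/
def HasIndependentElements (G : Type*) [AddCommGroup G] (m : ℕ) : Prop :=
  ∀ K : AddSubgroup G, Finite K →
    ∃ x : G, addOrderOf x = m ∧ Disjoint K (AddSubgroup.zmultiples x)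

section Embedding

variable {A B C G H : Type*} [AddCommGroup A] [AddCommGroup B] [AddCommGroup C] [AddCommGroup G]
  [AddCommGroup H]

theorem exists_comp_eq_of_range_le {i : B →+ C} (hi : Injective i) {f : A →+ C}
    (hf : f.range ≤ i.range) : ∃ g : A →+ B, i.comp g = f :=
  ⟨(LinearMap.codRestrictOfInjective f.toIntLinearMap i.toIntLinearMap hi
      fun a => hf ⟨a, rfl⟩).toAddMonoidHom,
    AddMonoidHom.ext fun a => LinearMap.codRestrictOfInjective_comp_apply
      f.toIntLinearMap i.toIntLinearMap hi (fun a => hf ⟨a, rfl⟩) a⟩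

theorem exists_injective_zmod_range_eq_zmultiples {n : ℕ} {x : G} (hx : addOrderOf x = n) :
    ∃ f : ZMod n →+ G, Injective f ∧ f.range = AddSubgroup.zmultiples x := by
  subst hx
  have hzero : zmultiplesHom G x (addOrderOf x) = 0 := by
    simp only [zmultiplesHom_apply, natCast_zsmul, addOrderOf_nsmul_eq_zero]
  refine ⟨ZMod.lift _ ⟨zmultiplesHom G x, hzero⟩, (ZMod.lift_injective _).2 fun k hk => ?_, ?_⟩
  · rwa [ZMod.intCast_zmod_eq_zero_iff_dvd, addOrderOf_dvd_iff_zsmul_eq_zero]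
  · ext y
    simp only [AddMonoidHom.mem_range, ZMod.intCast_surjective.exists, ZMod.lift_coe,
      zmultiplesHom_apply, AddSubgroup.mem_zmultiples_iff]

theorem exists_injective_zmod_addCircle {m : ℕ} (hm : 0 < m) :
    ∃ ι : ZMod m →+ AddCircle (1 : ℚ), Injective ι ∧ ∀ u, m • u = 0 → u ∈ ι.range := by
  obtain ⟨ι, hι, hrange⟩ :=
    exists_injective_zmod_range_eq_zmultiples (AddCircle.addOrderOf_period_div (p := (1 : ℚ)) hm)
  refine ⟨ι, hι, fun u hu => ?_⟩
  obtain ⟨j, -, rfl⟩ := (AddCircle.nsmul_eq_zero_iff hm).1 hu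
  rw [hrange, AddSubgroup.mem_zmultiples_iff]
  exact ⟨j, by rw [natCast_zsmul, ← AddCircle.coe_nsmul, nsmul_eq_mul, mul_one_div, mul_one]⟩

/-- Characters extend because `ℚ / ℤ` is divisible; on a group killed by `m` their values lie in
the `m`-torsion of `ℚ / ℤ`, which is a copy of `ZMod m`. -/
theorem exists_addMonoidHom_zmod_comp_eq {m : ℕ} (hm : 0 < m) (hB : ∀ b : B, m • b = 0)
    {j : A →+ B} (hj : Injective j) (f : A →+ ZMod m) : ∃ g : B →+ ZMod m, g.comp j = f := by
  obtain ⟨ι, hι, hrange⟩ := exists_injective_zmod_addCircle hm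
  obtain ⟨χ, hχ⟩ := (Module.Baer.of_divisible
    (AddCircle (1 : ℚ))).extension_property_addMonoidHom j hj (ι.comp f)
  obtain ⟨g, hg⟩ := exists_comp_eq_of_range_le hι (f := χ) <| by
    rintro _ ⟨b, rfl⟩
    exact hrange _ (by rw [← map_nsmul, hB, map_zero])
  exact ⟨g, AddMonoidHom.ext fun a => hι <| by
    rw [← AddMonoidHom.comp_apply, ← AddMonoidHom.comp_assoc, hg, hχ, AddMonoidHom.comp_apply]⟩

theorem exists_addMonoidHom_zmod_disjoint_ker {m : ℕ} (hm : 0 < m) (hH : ∀ x : H, m • x = 0)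
    (a : H) : ∃ χ : H →+ ZMod m, Disjoint (AddSubgroup.zmultiples a) χ.ker := by
  have hdvd : addOrderOf a ∣ m := addOrderOf_dvd_of_nsmul_eq_zero (hH a)
  have horder : addOrderOf ((m / addOrderOf a : ℕ) : ZMod m) = addOrderOf a := by
    rw [ZMod.addOrderOf_coe _ hm.ne', Nat.gcd_eq_right (Nat.div_dvd_of_dvd hdvd),
      Nat.div_div_self hdvd hm.ne']
  obtain ⟨i, hi, -⟩ := exists_injective_zmod_range_eq_zmultiples horder
  obtain ⟨j, hj, hrange⟩ := exists_injective_zmod_range_eq_zmultiples (x := a) rfl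
  obtain ⟨χ, hχ⟩ := exists_addMonoidHom_zmod_comp_eq hm hH hj i
  refine ⟨χ, AddSubgroup.disjoint_def.2 fun {y} hy hker => ?_⟩
  obtain ⟨k, rfl⟩ := hrange ▸ hy
  have hik : i k = 0 := by rwa [← hχ]
  rw [(injective_iff_map_eq_zero i).1 hi k hik, map_zero]

theorem exists_addMonoidHom_zmod_sup_zmultiples_inf_ker_eq {m : ℕ} (hm : 0 < m)
    (hH : ∀ x : H, m • x = 0) (K : AddSubgroup H) (a : H) :
    ∃ χ : H →+ ZMod m, (K ⊔ AddSubgroup.zmultiples a) ⊓ χ.ker = K := by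
  obtain ⟨χ, hχ⟩ := exists_addMonoidHom_zmod_disjoint_ker (H := H ⧸ K) hm
    (by rintro ⟨y⟩; exact congrArg _ (hH y)) a
  refine ⟨χ.comp (QuotientAddGroup.mk' K), le_antisymm ?_ (le_inf le_sup_left fun y hy => ?_)⟩
  · rintro y ⟨hy, hker⟩
    refine (QuotientAddGroup.eq_zero_iff y).1 (AddSubgroup.disjoint_def.1 hχ ?_ hker)
    have hmap := AddSubgroup.mem_map_of_mem (QuotientAddGroup.mk' K) hy
    rwa [AddSubgroup.map_sup, QuotientAddGroup.map_mk'_self, bot_sup_eq,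
      AddMonoidHom.map_zmultiples] at hmap
  · rw [AddMonoidHom.mem_ker, AddMonoidHom.comp_apply, QuotientAddGroup.mk'_apply,
      (QuotientAddGroup.eq_zero_iff y).2 hy, map_zero]

theorem exists_directSum_apply_eq {ι : Type*} {B : ι → Type*} [∀ i, AddCommGroup (B i)]
    (χ : ∀ i, H →+ B i) (hχ : ∀ y, {i | χ i y ≠ 0}.Finite) :
    ∃ f : H →+ DirectSum ι B, ∀ y i, f y i = χ i y := by
  classical
  obtain ⟨f, hf⟩ := exists_comp_eq_of_range_le (i := DirectSum.coeFnAddMonoidHom B)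
    DFunLike.coe_injective (f := AddMonoidHom.pi χ) <| by
      rintro _ ⟨y, rfl⟩
      refine ⟨DirectSum.mk B (hχ y).toFinset fun i => χ i y, funext fun i => ?_⟩
      by_cases hi : i ∈ (hχ y).toFinset
      · exact DirectSum.mk_apply_of_mem (f := fun i => χ i y) hi
      · have hzero : χ i y = 0 := by simpa using hi
        exact (DirectSum.mk_apply_of_notMem (f := fun i => χ i y) hi).trans hzero.symm
  exact ⟨f, fun y i => congrFun (DFunLike.congr_fun hf y) i⟩

theorem exists_injective_directSum_zmod [Countable H] {m : ℕ} (hm : 0 < m)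
    (hH : ∀ x : H, m • x = 0) : ∃ f : H →+ DirectSum ℕ fun _ => ZMod m, Injective f := by
  obtain ⟨h, hh⟩ := exists_surjective_nat H
  let K : ℕ → AddSubgroup H := fun n => ⨆ i < n, AddSubgroup.zmultiples (h i)
  have hK : ∀ y, ∃ n, y ∈ K n := fun y => by
    obtain ⟨i, rfl⟩ := hh y
    exact ⟨i + 1, AddSubgroup.mem_iSup_of_mem i <|
      AddSubgroup.mem_iSup_of_mem i.lt_succ_self (AddSubgroup.mem_zmultiples _)⟩
  have hKmono : Monotone K := fun a b hab => biSup_mono fun i hi => hi.trans_le hab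
  choose χ hχ using fun n =>
    exists_addMonoidHom_zmod_sup_zmultiples_inf_ker_eq hm hH (K n) (h n)
  have hker : ∀ n, K (n + 1) ⊓ (χ n).ker = K n := fun n => by
    rw [← hχ n]
    exact congrArg (· ⊓ (χ n).ker) (Nat.iSup_lt_succ ..)
  obtain ⟨f, hf⟩ := exists_directSum_apply_eq χ fun y => by
    obtain ⟨n, hn⟩ := hK y
    refine (Set.finite_Iio n).subset fun i hi => Set.mem_Iio.2 <| not_le.1 fun hni => hi ?_
    exact ((hker i).ge (hKmono hni hn)).2
  refine ⟨f, (injective_iff_map_eq_zero f).2 fun y hy => ?_⟩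
  have hdescend : ∀ n, y ∈ K n → y = 0 := fun n => by
    induction n with
    | zero => simp [K]
    | succ n ih => exact fun hn => ih ((hker n).le ⟨hn, (hf y n).symm.trans (by rw [hy]; rfl)⟩)
  obtain ⟨n, hn⟩ := hK y
  exact hdescend n hn

theorem exists_injective_directSum_zmod_prod_zmod [Countable G] {m n : ℕ} (hm : 0 < m) (hn : 0 < n)
    (hG : ∀ x : G, n • x = 0) (hcyc : IsAddCyclic (nsmulRange G m)) :
    ∃ f : G →+ (DirectSum ℕ fun _ => ZMod m) × ZMod n, Injective f := by
  obtain ⟨b, hb⟩ := (AddSubgroup.isAddCyclic_iff_exists_zmultiples_eq_top _).1 hcyc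
  obtain ⟨χ, hχ⟩ := exists_addMonoidHom_zmod_disjoint_ker hn hG b
  have : Countable (G ⧸ nsmulRange G m) := QuotientAddGroup.mk_surjective.countable
  obtain ⟨f, hf⟩ := exists_injective_directSum_zmod (H := G ⧸ nsmulRange G m) hm <| by
    rintro ⟨y⟩
    exact (QuotientAddGroup.eq_zero_iff (m • y)).2 ⟨y, rfl⟩
  refine ⟨(f.comp (QuotientAddGroup.mk' _)).prod χ, (AddMonoidHom.ker_eq_bot_iff _).1 ?_⟩
  rw [AddMonoidHom.ker_prod, ← AddMonoidHom.comap_ker, (AddMonoidHom.ker_eq_bot_iff f).2 hf,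
    AddMonoidHom.comap_bot, QuotientAddGroup.ker_mk', ← hb]
  exact hχ.eq_bot

end Embedding

section Independence

variable {A G H : Type*} [AddCommGroup A] [AddCommGroup G] [AddCommGroup H]

theorem index_comap_eq_zero_of_infinite_range {f : H →+ G} {K : AddSubgroup G}
    (hf : Infinite f.range) (hK : Finite K) : (K.comap f).index = 0 := by
  have : Finite (K.addSubgroupOf f.range) :=
    Finite.of_injective (fun y => (⟨y.1.1, y.2⟩ : K)) fun a b hab =>
      Subtype.ext (Subtype.ext (congrArg (fun z : K => (z : G)) hab))
  have hcard := AddSubgroup.card_mul_index (K.addSubgroupOf f.range)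
  rw [Nat.card_eq_zero_of_infinite (α := f.range)] at hcard
  rw [AddSubgroup.index_comap]
  exact (mul_eq_zero.1 hcard).resolve_left Nat.card_pos.ne'

open scoped Pointwise in
theorem exists_mem_forall_notMem_of_index_eq_zero {ι : Type*} {T : AddSubgroup G}
    (hT : T.FiniteIndex) {s : Finset ι} {S : ι → AddSubgroup G} (hS : ∀ i ∈ s, (S i).index = 0) :
    ∃ x ∈ T, ∀ i ∈ s, x ∉ S i := by
  by_contra! hcover
  obtain ⟨i, hi, hfin⟩ := AddSubgroup.exists_finiteIndex_of_leftCoset_cover (s := s)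
    (H := fun i => (S i).addSubgroupOf T) (g := 0) <| Set.eq_univ_of_forall fun y => by
      obtain ⟨i, hi, hy⟩ := hcover y y.2
      simp only [Pi.zero_apply, zero_vadd]
      exact Set.mem_biUnion hi hy
  refine AddSubgroup.relIndex_ne_zero_trans hfin.index_ne_zero (L := ⊤) ?_ ?_
  · rw [AddSubgroup.relIndex_top_right]
    exact hT.index_ne_zero
  · rw [AddSubgroup.relIndex_top_right, hS i hi]

theorem addOrderOf_eq_and_disjoint_zmultiples {m : ℕ} (hm : 0 < m) {K : AddSubgroup G} {x : G}
    (hx : m • x = 0) (hK : ∀ p : ℕ, p.Prime → p ∣ m → (m / p) • x ∉ K) :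
    addOrderOf x = m ∧ Disjoint K (AddSubgroup.zmultiples x) := by
  have hmod : addOrderOf (x : G ⧸ K) = m :=
    addOrderOf_eq_of_nsmul_and_div_prime_nsmul hm (congrArg ((↑) : G → G ⧸ K) hx)
      fun p hp hpm h => hK p hp hpm ((QuotientAddGroup.eq_zero_iff _).1 h)
  refine ⟨(addOrderOf_dvd_of_nsmul_eq_zero hx).antisymm ?_, AddSubgroup.disjoint_def.2 ?_⟩
  · rw [← hmod]
    exact addOrderOf_map_dvd (QuotientAddGroup.mk' K) x
  · rintro _ hyK ⟨k, rfl⟩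
    have hmk : (m : ℤ) ∣ k := by
      rw [← hmod, addOrderOf_dvd_iff_zsmul_eq_zero]
      exact (QuotientAddGroup.eq_zero_iff (k • x)).2 hyK
    obtain ⟨j, rfl⟩ := hmk
    change ((m : ℤ) * j) • x = 0
    rw [mul_comm, mul_smul, natCast_zsmul, hx, smul_zero]

theorem hasIndependentElements_of_finite_nsmulRange {m : ℕ} (hm : 0 < m)
    (hfin : Finite (nsmulRange G m))
    (hinf : ∀ p : ℕ, p.Prime → p ∣ m → Infinite (nsmulRange G (m / p))) :
    HasIndependentElements G m := fun K hK => by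
  obtain ⟨x, hx, hxK⟩ := exists_mem_forall_notMem_of_index_eq_zero (s := m.primeFactors)
    (AddSubgroup.finiteIndex_ker (nsmulAddMonoidHom m : G →+ G))
    (S := fun p => K.comap (nsmulAddMonoidHom (m / p))) fun p hp =>
      index_comap_eq_zero_of_infinite_range
        (hinf p (Nat.prime_of_mem_primeFactors hp) (Nat.dvd_of_mem_primeFactors hp)) hK
  exact ⟨x, addOrderOf_eq_and_disjoint_zmultiples hm hx fun p hp hpm =>
    hxK p (Nat.mem_primeFactors.2 ⟨hp, hpm, hm.ne'⟩)⟩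

theorem eq_zero_of_sum_mem_of_disjoint {ι : Type*} [LinearOrder ι] {K₀ : AddSubgroup G}
    {K S : ι → AddSubgroup G} (hK₀ : ∀ i, K₀ ≤ K i) (hSK : ∀ i j, i < j → S i ≤ K j)
    (hdisj : ∀ i, Disjoint (K i) (S i)) {y : ι → G} (hy : ∀ i, y i ∈ S i) (s : Finset ι)
    (hsum : ∑ i ∈ s, y i ∈ K₀) : ∀ i ∈ s, y i = 0 := by
  induction s using Finset.induction_on_max with
  | empty => simp
  | insert a s hmax ih =>
    rw [Finset.sum_insert fun ha => (hmax a ha).false] at hsum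
    have hlower : ∑ i ∈ s, y i ∈ K a := sum_mem fun i hi => hSK i a (hmax i hi) (hy i)
    have hya : y a = 0 := AddSubgroup.disjoint_def.1 (hdisj a)
      ((AddSubgroup.add_mem_cancel_right _ hlower).1 (hK₀ a hsum)) (hy a)
    rw [hya, zero_add] at hsum
    exact Finset.forall_mem_insert .. |>.2 ⟨hya, ih hsum⟩

theorem injective_toAddMonoid_coprod {ι : Type*} [LinearOrder ι] {B : ι → Type*}
    [∀ i, AddCommGroup (B i)] {φ : A →+ G} (hφ : Injective φ) {t : ∀ i, B i →+ G}
    (ht : ∀ i, Injective (t i)) {K : ι → AddSubgroup G} (hφK : ∀ i, φ.range ≤ K i)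
    (htK : ∀ i j, i < j → (t i).range ≤ K j) (hdisj : ∀ i, Disjoint (K i) (t i).range) :
    Injective ((DirectSum.toAddMonoid t).coprod φ) := by
  classical
  refine (injective_iff_map_eq_zero _).2 fun ⟨v, a⟩ hva => ?_
  rw [AddMonoidHom.coprod_apply] at hva
  have hmem : ∑ i ∈ DFinsupp.support v, t i (v i) ∈ φ.range := by
    rw [eq_neg_of_add_eq_zero_left (b := φ a) (a := ∑ i ∈ DFinsupp.support v, t i (v i))]
    · exact neg_mem ⟨a, rfl⟩
    · rw [← hva]
      congr 1
      exact (DFinsupp.sumAddHom_apply t v).symm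
  have hv : v = 0 := DFinsupp.support_eq_empty.1 <| Finset.eq_empty_of_forall_notMem fun i hi =>
    DFinsupp.mem_support_iff.1 hi <| (injective_iff_map_eq_zero _).1 (ht i) _ <|
      eq_zero_of_sum_mem_of_disjoint hφK htK hdisj (y := fun i => t i (v i))
        (fun i => ⟨v i, rfl⟩) _ hmem i hi
  rw [hv, map_zero, zero_add] at hva
  rw [hv, (injective_iff_map_eq_zero φ).1 hφ a hva, Prod.mk_zero_zero]

theorem exists_injective_directSum_zmod_prod [Finite A] {m : ℕ} (hm : 0 < m) {φ : A →+ G}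
    (hφ : Injective φ) (hindep : HasIndependentElements G m) :
    ∃ g : (DirectSum ℕ fun _ => ZMod m) × A →+ G, Injective g := by
  choose! x hx hdisj using hindep
  let K : ℕ → AddSubgroup G := fun n => (fun L => L ⊔ AddSubgroup.zmultiples (x L))^[n] φ.range
  have hKsucc : ∀ n, K (n + 1) = K n ⊔ AddSubgroup.zmultiples (x (K n)) := fun n =>
    iterate_succ_apply' ..
  have hKmono : Monotone K := monotone_nat_of_le_succ fun n => hKsucc n ▸ le_sup_left
  have hKfin : ∀ n, Finite (K n) := fun n => by
    induction n with
    | zero => exact Set.finite_range φ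
    | succ n ih =>
      have hcyc : (AddSubgroup.zmultiples (x (K n)) : Set G).Finite :=
        finite_zmultiples.2 (addOrderOf_pos_iff.1 (hx _ ih ▸ hm))
      rw [hKsucc]
      change Set.Finite (_ : Set G)
      rw [AddSubgroup.add_normal]
      exact Set.Finite.add ih hcyc
  choose t ht hrange using fun n =>
    exists_injective_zmod_range_eq_zmultiples (hx (K n) (hKfin n))
  refine ⟨_, injective_toAddMonoid_coprod hφ ht (K := K) (fun n => hKmono n.zero_le)
    (fun i j hij => ?_) fun n => hrange n ▸ hdisj _ (hKfin n)⟩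
  exact (hrange i ▸ hKsucc i ▸ le_sup_right).trans (hKmono hij)

theorem exists_finite_nsmulRange_and_infinite_div_prime (hexp : AddMonoid.ExponentExists G) :
    ∃ m, 0 < m ∧ Finite (nsmulRange G m) ∧
      ∀ p : ℕ, p.Prime → p ∣ m → Infinite (nsmulRange G (m / p)) := by
  classical
  have hex : ∃ m, 0 < m ∧ Finite (nsmulRange G m) := by
    obtain ⟨k, hk, hkill⟩ := hexp
    refine ⟨k, hk, (Set.finite_singleton (0 : G)).subset ?_⟩
    rintro _ ⟨x, rfl⟩
    exact hkill x
  refine ⟨Nat.find hex, (Nat.find_spec hex).1, (Nat.find_spec hex).2, fun p hp hpm => ?_⟩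
  have hpos : 0 < Nat.find hex := (Nat.find_spec hex).1
  exact not_finite_iff_infinite.1 fun hfin => Nat.find_min hex (Nat.div_lt_self hpos hp.one_lt)
    ⟨Nat.div_pos (Nat.le_of_dvd hpos hpm) hp.pos, hfin⟩

end Independence

section Biembedding

variable {G : Type*} [AddCommGroup G] {m : ℕ}

theorem card_nsmulRange_mul_nsmul_eq_zero (m : ℕ) (x : G) :
    (Nat.card (nsmulRange G m) * m) • x = 0 := by
  rw [mul_nsmul']
  exact congrArg Subtype.val (card_nsmul_eq_zero' (x := (⟨m • x, x, rfl⟩ : nsmulRange G m)))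

theorem exists_addOrderOf_eq_two_mul (hm : 0 < m) (hcard : Nat.card (nsmulRange G m) = 2) {x : G}
    (hx : addOrderOf x = m) : ∃ y : G, addOrderOf y = 2 * m := by
  have hkill : ∀ y : G, (2 * m) • y = 0 := hcard ▸ card_nsmulRange_mul_nsmul_eq_zero m
  obtain ⟨y, hy⟩ := AddMonoid.exists_addOrderOf_eq_exponent (G := G) ⟨2 * m, by lia, hkill⟩
  obtain ⟨k, hk⟩ : m ∣ AddMonoid.exponent G := hx ▸ AddMonoid.addOrder_dvd_exponent x
  have hk_dvd : k ∣ 2 := Nat.dvd_of_mul_dvd_mul_left hm <| by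
    rw [← hk, mul_comm m 2]
    exact AddMonoid.exponent_dvd_of_forall_nsmul_eq_zero hkill
  have hk_ne : k ≠ 1 := by
    rintro rfl
    have hbot : nsmulRange G m = ⊥ := (AddSubgroup.eq_bot_iff_forall _).2 <| by
      rintro _ ⟨z, rfl⟩
      rw [← mul_one m, ← hk]
      exact AddMonoid.exponent_nsmul_eq_zero z
    rw [hbot, AddSubgroup.card_bot] at hcard
    exact absurd hcard (by decide)
  rw [(Nat.dvd_prime Nat.prime_two).1 hk_dvd |>.resolve_left hk_ne, mul_comm] at hk
  exact ⟨y, hy.trans hk⟩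

variable [Countable G]

theorem addBiembeddable_directSum_zmod (hm : 0 < m) (hG : ∀ x : G, m • x = 0)
    (hindep : HasIndependentElements G m) :
    AddBiembeddable G (DirectSum ℕ fun _ => ZMod m) := by
  obtain ⟨f, hf⟩ := exists_injective_directSum_zmod hm hG
  obtain ⟨g, hg⟩ := exists_injective_directSum_zmod_prod hm
    (injective_of_subsingleton (0 : Unit →+ G)) hindep
  exact ⟨f, g.comp (AddMonoidHom.inl _ _), hf, hg.comp (Prod.mk_left_injective 0)⟩

theorem addBiembeddable_directSum_zmod_prod_zmod (hm : 0 < m)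
    (hcard : Nat.card (nsmulRange G m) = 2) (hindep : HasIndependentElements G m) :
    AddBiembeddable G ((DirectSum ℕ fun _ => ZMod m) × ZMod (2 * m)) := by
  have hkill : ∀ x : G, (2 * m) • x = 0 := hcard ▸ card_nsmulRange_mul_nsmul_eq_zero m
  obtain ⟨f, hf⟩ := exists_injective_directSum_zmod_prod_zmod hm (Nat.mul_pos two_pos hm) hkill
    (isAddCyclic_of_prime_card (p := 2) hcard)
  obtain ⟨x, hx, -⟩ := hindep ⊥ inferInstance
  obtain ⟨y, hy⟩ := exists_addOrderOf_eq_two_mul hm hcard hx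
  obtain ⟨φ, hφ, -⟩ := exists_injective_zmod_range_eq_zmultiples hy
  have : NeZero (2 * m) := ⟨(Nat.mul_pos two_pos hm).ne'⟩
  obtain ⟨g, hg⟩ := exists_injective_directSum_zmod_prod hm hφ hindep
  exact ⟨f, g, hf, hg⟩

theorem exists_addBiembeddable_of_card_nsmulRange_le_two (hexp : AddMonoid.ExponentExists G)
    (hcard : ∀ m, Finite (nsmulRange G m) → Nat.card (nsmulRange G m) ≤ 2) :
    ∃ m, 1 ≤ m ∧ (AddBiembeddable G (DirectSum ℕ fun _ => ZMod m) ∨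
      AddBiembeddable G ((DirectSum ℕ fun _ => ZMod m) × ZMod (2 * m))) := by
  obtain ⟨m, hm, hfin, hinf⟩ := exists_finite_nsmulRange_and_infinite_div_prime hexp
  have hindep := hasIndependentElements_of_finite_nsmulRange hm hfin hinf
  refine ⟨m, hm, (hcard m hfin).lt_or_eq.imp (fun hlt => ?_) fun htwo =>
    addBiembeddable_directSum_zmod_prod_zmod hm htwo hindep⟩
  have htrivial : nsmulRange G m = ⊥ :=
    AddSubgroup.card_eq_one.1 (le_antisymm (Nat.lt_succ_iff.1 hlt) Nat.card_pos)
  exact addBiembeddable_directSum_zmod hm (fun x => AddSubgroup.mem_bot.1 <|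
    htrivial ▸ ⟨x, rfl⟩) hindep

end Biembedding

section Polymorphism

variable {ι F G H V X : Type*} [AddCommGroup F] [AddCommGroup G] [AddCommGroup H]

theorem exists_injective_comp_single [Finite ι] {F : ι → Type*} [DecidableEq ι]
    [∀ i, AddCommGroup (F i)] {s : (∀ i, F i) →+ H} (hs : ∀ p, (∀ i, p i ≠ 0) → s p ≠ 0) :
    ∃ i, Injective (s.comp (AddMonoidHom.single F i)) := by
  cases nonempty_fintype ι
  simp only [injective_iff_map_eq_zero]
  by_contra! hker
  choose x hx hne using hker
  apply hs x hne
  rw [← Finset.univ_sum_single x, map_sum]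
  exact Finset.sum_eq_zero fun i _ => hx i

theorem map_eq_map_single_of_forall_ne_zero [DecidableEq ι] {s : (ι → F) →+ H}
    (hs : ∀ p, (∀ i, p i ≠ 0) → s p ≠ 0) {i : ι}
    (hi : Surjective (s.comp (AddMonoidHom.single (fun _ => F) i)))
    {p : ι → F} (hp : ∀ j, p j ≠ 0) : s p = s (Pi.single i (p i)) := by
  obtain ⟨a, ha⟩ := hi (s p)
  have hsub : s (p - Pi.single i a) = 0 := by
    rw [map_sub, sub_eq_zero]
    exact ha.symm
  by_contra hne
  refine hs _ (fun j => ?_) hsub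
  obtain rfl | hj := eq_or_ne j i
  · rw [Pi.sub_apply, Pi.single_eq_same, sub_ne_zero]
    exact fun h => hne (h ▸ ha.symm)
  · rw [Pi.sub_apply, Pi.single_eq_of_ne hj, sub_zero]
    exact hp j

theorem exists_ne_zero_add_ne_zero [Finite F] (hF : 2 < Nat.card F) (x : F) :
    ∃ y, y ≠ 0 ∧ x + y ≠ 0 := by
  classical
  cases nonempty_fintype F
  obtain ⟨y, -, hy⟩ := Finset.exists_mem_notMem_of_card_lt_card (s := {0, -x}) (t := Finset.univ)
    (Finset.card_le_two.trans_lt (by rwa [Finset.card_univ, ← Nat.card_eq_fintype_card]))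
  simp only [Finset.mem_insert, Finset.mem_singleton, not_or] at hy
  exact ⟨y, hy.1, fun h => hy.2 (eq_neg_of_add_eq_zero_right h)⟩

/-- The idea: every tuple is a difference of two nowhere zero tuples. -/
theorem exists_forall_eq_apply_of_two_lt_card [Finite ι] [Finite F] (hF : 2 < Nat.card F)
    {s : (ι → F) →+ F} (hs : ∀ p, (∀ i, p i ≠ 0) → s p ≠ 0) :
    ∃ i, ∃ c : F →+ F, Injective c ∧ ∀ p, s p = c (p i) := by
  classical
  obtain ⟨i, hi⟩ := exists_injective_comp_single hs
  have hnowhere : ∀ p : ι → F, (∀ j, p j ≠ 0) → s p = s (Pi.single i (p i)) := fun _ =>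
    map_eq_map_single_of_forall_ne_zero hs (Finite.injective_iff_surjective.1 hi)
  refine ⟨i, _, hi, fun p => ?_⟩
  choose q hq hpq using fun j => exists_ne_zero_add_ne_zero hF (p j)
  have hadd := hnowhere (p + q) hpq
  rwa [map_add, Pi.add_apply, Pi.single_add, map_add, hnowhere q hq, add_left_inj] at hadd

theorem card_le_two_of_identity [Finite ι] [Finite F] {s : (ι → F) →+ F}
    (hs : ∀ p, (∀ i, p i ≠ 0) → s p ≠ 0) {e₁ e₂ : F → X} (he₂ : Injective e₂)
    {σ τ : ι → V} (hστ : ∀ i, σ i ≠ τ i) (hid : ∀ v : V → F, e₁ (s (v ∘ σ)) = e₂ (s (v ∘ τ))) :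
    Nat.card F ≤ 2 := by
  classical
  by_contra! hF
  obtain ⟨i, c, hc, hsc⟩ := exists_forall_eq_apply_of_two_lt_card hF hs
  have : Nontrivial F := Finite.one_lt_card_iff_nontrivial.1 (by lia)
  obtain ⟨w, hw⟩ := exists_ne (0 : F)
  simp only [hsc, comp_apply] at hid
  have hw' := hid (Pi.single (τ i) w)
  rw [Pi.single_eq_of_ne (hστ i), Pi.single_eq_same] at hw'
  exact hw (hc (he₂ (hw'.symm.trans (hid 0))))

theorem card_nsmulRange_le_two_of_identity [Finite ι] {s : (ι → G) →+ G}
    (hs : ∀ p, (∀ i, p i ≠ 0) → s p ≠ 0) {e₁ e₂ : G → X} (he₂ : Injective e₂)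
    {σ τ : ι → V} (hστ : ∀ i, σ i ≠ τ i) (hid : ∀ v : V → G, e₁ (s (v ∘ σ)) = e₂ (s (v ∘ τ)))
    (m : ℕ) (hfin : Finite (nsmulRange G m)) : Nat.card (nsmulRange G m) ≤ 2 := by
  let t : (ι → nsmulRange G m) →+ nsmulRange G m :=
    (s.comp ((nsmulRange G m).subtype.compLeft ι)).codRestrict _ fun p => by
      choose q hq using fun i => (p i).2
      exact ⟨s q, (map_nsmul s m q).symm.trans (congrArg s (funext hq))⟩
  refine card_le_two_of_identity (s := t) (fun p hp htp => ?_)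
    (e₁ := fun x => e₁ x) (he₂.comp Subtype.val_injective) hστ fun v => hid fun j => v j
  exact hs (fun i => p i) (fun i => by simpa using hp i) (congrArg Subtype.val htp)

end Polymorphism

theorem stmt_1_general {G ι V X : Type*} [AddCommGroup G] [Countable G] [Finite ι]
    (hexp : AddMonoid.ExponentExists G) (s : (ι → G) →+ G)
    (hs : ∀ p, (∀ i, p i ≠ 0) → s p ≠ 0) (e₁ e₂ : G → X) (he₂ : Injective e₂)
    (σ τ : ι → V) (hστ : ∀ i, σ i ≠ τ i) (hid : ∀ v : V → G, e₁ (s (v ∘ σ)) = e₂ (s (v ∘ τ))) :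
    ∃ m, 1 ≤ m ∧ (AddBiembeddable G (DirectSum ℕ fun _ => ZMod m) ∨
      AddBiembeddable G ((DirectSum ℕ fun _ => ZMod m) × ZMod (2 * m))) :=
  exists_addBiembeddable_of_card_nsmulRange_le_two hexp
    (card_nsmulRange_le_two_of_identity hs he₂ hστ hid)

/-- A countable abelian group of finite exponent such that `(G, ≠)` has a
pseudo-Siggers polymorphism is bi-embeddable with `⨁_ℕ ZMod m` or with
`(⨁_ℕ ZMod m) × ZMod (2*m)` for some `m ≥ 1`. -/
theorem stmt_1 (G : Type) [AddCommGroup G] [Countable G]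
    (hexp : ∃ k : ℕ, 1 ≤ k ∧ ∀ x : G, k • x = 0)
    (s : (Fin 6 → G) →+ G)
    (hs : ∀ p q : Fin 6 → G, (∀ i, p i ≠ q i) → s p ≠ s q)
    (e₁ e₂ : G →+ G)
    (he₁ : Function.Injective e₁) (he₂ : Function.Injective e₂)
    (hsig : ∀ x y z : G, e₁ (s ![x, y, x, z, y, z]) = e₂ (s ![y, x, z, x, z, y])) :
    ∃ m : ℕ, 1 ≤ m ∧
      ((∃ (f : G →+ DirectSum ℕ (fun _ => ZMod m))
          (g : DirectSum ℕ (fun _ => ZMod m) →+ G),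
          Function.Injective f ∧ Function.Injective g) ∨
       (∃ (f : G →+ (DirectSum ℕ (fun _ => ZMod m)) × ZMod (2 * m))
          (g : (DirectSum ℕ (fun _ => ZMod m)) × ZMod (2 * m) →+ G),
          Function.Injective f ∧ Function.Injective g)) := by
  exact stmt_1_general hexp s (fun p hp => map_zero s ▸ hs p 0 hp) e₁ e₂ he₂
    ![(0 : Fin 3), 1, 0, 2, 1, 2] ![1, 0, 2, 0, 2, 1] (by decide) fun v => by
      rw [← FinVec.map_eq, ← FinVec.map_eq]
      exact hsig (v 0) (v 1) (v 2)
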